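/- For any block matrix with non-negative entries of the form [[B, y],[x^T, w]], where B is a d×d non-negative matrix with per(B) > 0, x, y ∈ ℝ^d, and w a scalar, the permanent satisfies per([[B, y],[x^T, w]]) = per(B)·(w + x^T B* y), where B* is the permanental inverse of B. -/

import Mathlib

open Matrix BigOperators

/-- The permanent of a square matrix. -/
noncomputable def per {α : Type*} [DecidableEq α] [Fintype α] (A : Matrix α α ℝ) : ℝ :=
  ∑ σ : Equiv.Perm α, ∏ i, A i (σ i)

/-- The permanental inverse. -/
noncomputable def pinv {d : ℕ} (B : Matrix (Fin (d + 1)) (Fin (d + 1)) ℝ) :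
    Matrix (Fin (d + 1)) (Fin (d + 1)) ℝ :=
  Matrix.of fun i j => per (B.submatrix (Fin.succAbove j) (Fin.succAbove i)) / per B

/-!
Expand the permanent of the block matrix along its last row. The corner `w` contributes
`w * per B`; the entry `x k` contributes `x k` times the permanent of `B` with its column `k`
replaced by `y`, since the order of columns does not affect a permanent. As the permanent is linear
in each column, the latter is the `k`-th entry of the permanental adjugate of `B` applied to `y`
(Cramer's rule without signs).
-/

section CommSemiring

variable {m n ι R : Type*} [Fintype m] [DecidableEq m] [Fintype n] [DecidableEq n] [CommSemiring R]

theorem permanent_submatrix_equiv (e f : m ≃ n) (A : Matrix n n R) :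
    (A.submatrix e f).permanent = A.permanent := by
  refine Fintype.sum_equiv (f.equivCongr e) _ _ fun σ => ?_
  refine Fintype.prod_equiv f _ _ fun i => ?_
  simp

theorem permanent_updateCol (A : Matrix n n R) (k : n) (y : n → R) :
    (A.updateCol k y).permanent =
      ∑ σ : Equiv.Perm n, y (σ k) * ∏ i ∈ Finset.univ.erase k, A (σ i) i := by
  refine Finset.sum_congr rfl fun σ _ => ?_
  rw [← Finset.mul_prod_erase _ _ (Finset.mem_univ k), updateCol_self]
  congr 1
  exact Finset.prod_congr rfl fun i hi => updateCol_ne (Finset.ne_of_mem_erase hi)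

-- `swap none a ∘ some` enumerates the columns other than `a`, `none` taking the place of `a`.
theorem permanent_option_row (A : Matrix (Option n) (Option n) R) :
    A.permanent =
      ∑ a, A none a * (A.submatrix some fun j => Equiv.swap none a (some j)).permanent := by
  rw [← permanent_transpose, permanent, ← Equiv.Perm.decomposeOption.symm.sum_comp,
    Fintype.sum_prod_type]
  refine Finset.sum_congr rfl fun a _ => ?_
  rw [← permanent_transpose (A.submatrix _ _), permanent, Finset.mul_sum]
  refine Finset.sum_congr rfl fun τ _ => ?_
  simp [Fintype.prod_option]

/-- The permanental analogue of `Matrix.adjugate`. Replacing column `i` of `A` by the `j`-th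
standard basis vector encodes the deletion of row `j` and column `i`, so that no enumeration of
the remaining indices is needed. -/
def permanentalAdjugate (A : Matrix n n R) : Matrix n n R :=
  of fun i j => (A.updateCol i (Pi.single j 1)).permanent

theorem permanentalAdjugate_mulVec_apply (A : Matrix n n R) (y : n → R) (k : n) :
    (permanentalAdjugate A *ᵥ y) k = (A.updateCol k y).permanent := by
  simp only [mulVec, dotProduct, permanentalAdjugate, of_apply, permanent_updateCol,
    Finset.sum_mul]
  rw [Finset.sum_comm]
  refine Finset.sum_congr rfl fun σ _ => ?_
  simp [Pi.single_apply, mul_comm]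

theorem permanent_fromBlocks_replicateCol_replicateRow [Unique ι] [Fintype ι] [DecidableEq ι]
    (B : Matrix n n R) (x y : n → R) (w : R) :
    (fromBlocks B (replicateCol ι y) (replicateRow ι x) (of fun _ _ => w)).permanent =
      B.permanent * w + x ⬝ᵥ permanentalAdjugate B *ᵥ y := by
  let e : Option n ≃ n ⊕ ι := (Equiv.optionEquivSumPUnit n).trans
    (Equiv.sumCongr (Equiv.refl n) (Equiv.ofUnique PUnit.{1} ι))
  set M := fromBlocks B (replicateCol ι y) (replicateRow ι x) (of fun _ _ => w)
  have minor_none : (M.submatrix e e).submatrix some some = B := rfl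
  have minor_some (k : n) :
      (M.submatrix e e).submatrix some (fun j => Equiv.swap none (some k) (some j)) =
        B.updateCol k y := by
    ext i j
    obtain rfl | hjk := eq_or_ne j k
    · simp [M, e]
    · simp [M, e, hjk, Equiv.swap_apply_of_ne_of_ne]
  rw [← permanent_submatrix_equiv e e, permanent_option_row, Fintype.sum_option]
  simp only [Equiv.swap_self, Equiv.refl_apply, minor_none, minor_some]
  simp [M, e, dotProduct, permanentalAdjugate_mulVec_apply, mul_comm w]

theorem permanentalAdjugate_fin_succ_eq_permanent_submatrix {d : ℕ}
    (B : Matrix (Fin (d + 1)) (Fin (d + 1)) R) (i j : Fin (d + 1)) :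
    permanentalAdjugate B i j = (B.submatrix j.succAbove i.succAbove).permanent := by
  -- With row `j` and column `i` moved last, the basis vector becomes the last column `(0, 1)`.
  let e (k : Fin (d + 1)) : Fin d ⊕ Unit ≃ Fin (d + 1) :=
    (Equiv.optionEquivSumPUnit (Fin d)).symm.trans (finSuccEquiv' k).symm
  have reindex : (B.updateCol i (Pi.single j 1)).submatrix (e j) (e i) =
      fromBlocks (B.submatrix j.succAbove i.succAbove) (replicateCol Unit 0)
        (replicateRow Unit fun k => B j (i.succAbove k)) (of fun _ _ => 1) := by
    ext (a | a) (b | b) <;> simp [e]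
  rw [permanentalAdjugate, of_apply, ← permanent_submatrix_equiv (e j) (e i), reindex,
    permanent_fromBlocks_replicateCol_replicateRow]
  simp

end CommSemiring

section Semifield

variable {n ι K : Type*} [Fintype n] [DecidableEq n] [Semifield K]

/-- The permanental inverse `B*` over an arbitrary semifield and finite index type; it is `0` when
the permanent of `B` vanishes. -/
def permanentalInverse (B : Matrix n n K) : Matrix n n K :=
  B.permanent⁻¹ • permanentalAdjugate B

theorem stmt1_general [Unique ι] [Fintype ι] [DecidableEq ι] (B : Matrix n n K) (x y : n → K)
    (w : K) (hper : B.permanent ≠ 0) :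
    (fromBlocks B (replicateCol ι y) (replicateRow ι x) (of fun _ _ => w)).permanent =
      B.permanent * (w + x ⬝ᵥ permanentalInverse B *ᵥ y) := by
  rw [permanent_fromBlocks_replicateCol_replicateRow, permanentalInverse, smul_mulVec,
    dotProduct_smul, smul_eq_mul, mul_add, mul_inv_cancel_left₀ hper]

end Semifield

theorem per_eq_permanent {n : Type*} [Fintype n] [DecidableEq n] (A : Matrix n n ℝ) :
    per A = A.permanent :=
  permanent_transpose A

theorem pinv_eq_permanentalInverse {d : ℕ} (B : Matrix (Fin (d + 1)) (Fin (d + 1)) ℝ) :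
    pinv B = permanentalInverse B := by
  ext i j
  simp [pinv, permanentalInverse, permanentalAdjugate_fin_succ_eq_permanent_submatrix,
    per_eq_permanent, div_eq_inv_mul]

theorem stmt1 {d : ℕ} (B : Matrix (Fin (d + 1)) (Fin (d + 1)) ℝ)
    (x y : Fin (d + 1) → ℝ) (w : ℝ)
    (hB : ∀ i j, 0 ≤ B i j) (hx : ∀ i, 0 ≤ x i) (hy : ∀ i, 0 ≤ y i) (hw : 0 ≤ w)
    (hper : 0 < per B) :
    per (Matrix.fromBlocks B (Matrix.of fun i (_ : Fin 1) => y i)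
        (Matrix.of fun (_ : Fin 1) j => x j) (Matrix.of fun (_ : Fin 1) (_ : Fin 1) => w)) =
      per B * (w + x ⬝ᵥ (pinv B).mulVec y) := by
  simp only [per_eq_permanent, pinv_eq_permanentalInverse] at hper ⊢
  exact stmt1_general B x y w hper.ne'
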